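/- Let f, g: S^1 → ℝ^2 be generic functions. If H_0^{u,v}(s∘f) = H_0^{u,v}(s∘g) for every (u,v) ∈ Δ^+ and every s ∈ Σ_2, then there exists a C^1-diffeomorphism h: S^1 → S^1 such that g∘h = f. -/

import Mathlib

open Set Real Filter Topology

noncomputable section

abbrev Circ := AddCircle (2 * π)

def liftOf (F : Circ → ℝ × ℝ) : ℝ → ℝ × ℝ := fun t => F (t : Circ)

def IsC1 (F : Circ → ℝ × ℝ) : Prop := ContDiff ℝ 1 (liftOf F)

def tangentAt (F : Circ → ℝ × ℝ) (t : ℝ) : Submodule ℝ (ℝ × ℝ) :=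
  Submodule.span ℝ {deriv (liftOf F) t}

def Generic (F : Circ → ℝ × ℝ) : Prop :=
  IsC1 F ∧ (∀ t : ℝ, deriv (liftOf F) t ≠ 0) ∧
  {p : ℝ × ℝ | ∃ x y : Circ, x ≠ y ∧ F x = p ∧ F y = p}.Finite ∧
  (∀ p : ℝ × ℝ, (∃ x y : Circ, x ≠ y ∧ F x = p ∧ F y = p) →
    ∃ x y : Circ, x ≠ y ∧ {z : Circ | F z = p} = {x, y}) ∧
  (∀ t₁ t₂ : ℝ, liftOf F t₁ = liftOf F t₂ → tangentAt F t₁ = tangentAt F t₂ →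
    (t₁ : Circ) = (t₂ : Circ))

def Dset (u : ℝ × ℝ) : Set (ℝ × ℝ) := {w | w.1 ≤ u.1 ∧ w.2 ≤ u.2}

def persBetti (F : Circ → ℝ × ℝ) (u v : ℝ × ℝ) : ℕ :=
  ((fun x => connectedComponentIn (F ⁻¹' Dset v) x) '' (F ⁻¹' Dset u)).ncard

def Sigma2 : Set ((ℝ × ℝ) → (ℝ × ℝ)) :=
  {id, fun p => (-p.1, p.2), fun p => (p.1, -p.2), fun p => (-p.1, -p.2)}

def CircleDiffeo (H : Circ → Circ) : Prop :=
  ∃ h : ℝ → ℝ, ContDiff ℝ 1 h ∧ (∀ t, deriv h t ≠ 0) ∧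
    ((∀ t, h (t + 2 * π) = h t + 2 * π) ∨ (∀ t, h (t + 2 * π) = h t - 2 * π)) ∧
    (∀ t : ℝ, H (t : Circ) = ((h t : ℝ) : Circ))

def C1dist (F G : Circ → ℝ × ℝ) : ℝ :=
  ⨆ t : ℝ, (‖liftOf F t - liftOf G t‖ + ‖deriv (liftOf F) t - deriv (liftOf G) t‖)

def cross (a b : ℝ × ℝ) : ℝ := a.1 * b.2 - a.2 * b.1

/-!
Take a small rectangle with upper corner `p` and count, with inclusion-exclusion over its four
corners `q`, the components of a sublevel set slightly above `p` which meet `{F ≤ q}`. This count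
vanishes when `p` is off the curve, while it is `1` when `p` is a simple point at which the tangent
line has negative slope, since the curve then has a strict local minimum for the product order
there. Hence persistent Betti numbers detect such points and, after reflecting in the vertical axis,
also the simple points with a tangent line of positive slope. Oblique points are limits of oblique
simple points, so each curve passes through all oblique points of the other one.

Call parameters of the two curves related when they have the same image and the same tangent line.
As multiple points are clean, this closed relation is the graph of a partial injection. Near a
related pair, match the parameters so that the first (or second) coordinates of the curves agree:
the other coordinates then also agree, because where they differ no point is oblique, so that both
of them are stationary. Thus the relation is locally the graph of a `C¹` function with nonzero
derivative, its domain is open, closed and nonempty, and it is the graph of a diffeomorphism.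
-/

section SublevelSets

variable {X α β : Type*} [TopologicalSpace X]

lemma connectedComponentIn_subset_of_disjoint_frontier {N U : Set X} {x : X} (hxN : x ∈ N)
    (hN : Disjoint (frontier N) U) : connectedComponentIn U x ⊆ N := by
  by_cases hxU : x ∈ U
  · have hU : U ⊆ interior N ∪ (closure N)ᶜ := fun y hy ↦ by
      by_cases hyN : y ∈ closure N
      · exact .inl (by_contra fun h ↦ disjoint_left.1 hN ⟨hyN, h⟩ hy)
      · exact .inr hyN
    have hx : x ∈ interior N := (hU hxU).resolve_right (not_not_intro (subset_closure hxN))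
    refine (isPreconnected_connectedComponentIn.subset_left_of_subset_union isOpen_interior
      isClosed_closure.isOpen_compl ?_ ((connectedComponentIn_subset U x).trans hU)
      ⟨x, mem_connectedComponentIn hxU, hx⟩).trans interior_subset
    exact disjoint_compl_right.mono_left interior_subset_closure
  · simp [connectedComponentIn_eq_empty hxU]

lemma finite_image_connectedComponentIn [LocallyConnectedSpace X] {K U : Set X}
    (hK : IsCompact K) (hKU : K ⊆ interior U) : (connectedComponentIn U '' K).Finite := by
  have hsub {y : X} (hy : y ∈ interior U) :
      connectedComponentIn (interior U) y ∈ 𝓝 y :=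
    connectedComponentIn_mem_nhds (isOpen_interior.mem_nhds hy)
  obtain ⟨s, -, hs⟩ := hK.elim_nhds_subcover _ fun y hy ↦ hsub (hKU hy)
  refine (s.finite_toSet.image (connectedComponentIn U)).subset ?_
  rintro _ ⟨y, hy, rfl⟩
  obtain ⟨x, hx, hyx⟩ := mem_iUnion₂.1 (hs hy)
  exact ⟨x, hx, connectedComponentIn_eq (connectedComponentIn_mono x interior_subset hyx)⟩

/-- The components of the sublevel set `{F ≤ v}` that meet `{F ≤ u}`, that is, a basis of
`H₀^{u,v}(F)`. -/
def sublevelComponents {P : Type*} [Preorder P] (F : X → P) (u v : P) : Set (Set X) :=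
  connectedComponentIn (F ⁻¹' Iic v) '' (F ⁻¹' Iic u)

section Preorder

variable {P : Type*} [Preorder P] {F : X → P} {u u' v : P} {K : Set X} {z : X}

lemma sublevelComponents_mono (h : u ≤ u') :
    sublevelComponents F u v ⊆ sublevelComponents F u' v :=
  image_mono (preimage_mono (Iic_subset_Iic.2 h))

lemma exists_mem_le_of_mem_sublevelComponents (huv : u ≤ v) (hK : K ∈ sublevelComponents F u v) :
    ∃ z ∈ K, F z ≤ u := by
  obtain ⟨z, hz, rfl⟩ := hK
  exact ⟨z, mem_connectedComponentIn (show F z ≤ v from le_trans hz huv), hz⟩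

lemma eq_connectedComponentIn_of_mem_sublevelComponents (hK : K ∈ sublevelComponents F u v)
    (hz : z ∈ K) : K = connectedComponentIn (F ⁻¹' Iic v) z := by
  obtain ⟨y, -, rfl⟩ := hK
  exact connectedComponentIn_eq hz

lemma mem_sublevelComponents_of_le (hK : K ∈ sublevelComponents F u v) (hz : z ∈ K)
    (hzu : F z ≤ u') : K ∈ sublevelComponents F u' v :=
  ⟨z, hzu, (eq_connectedComponentIn_of_mem_sublevelComponents hK hz).symm⟩

end Preorder

variable [LinearOrder α] [LinearOrder β]

/-- The inclusion-exclusion count, at the corners of the rectangle `Ioc u p`, of the components of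
`{F ≤ v}`: those entering the sublevel set of `p`, corrected by those which already enter the
sublevel set of one of the other three corners. -/
def cornerCount (F : X → α × β) (u p v : α × β) : ℤ :=
  (sublevelComponents F p v).ncard + (sublevelComponents F u v).ncard
    - (sublevelComponents F (u.1, p.2) v).ncard - (sublevelComponents F (p.1, u.2) v).ncard

lemma cornerCount_congr {Y : Type*} [TopologicalSpace Y] {F : X → α × β} {G : Y → α × β}
    (h : ∀ u v : α × β, u.1 < v.1 → u.2 < v.2 →
      (sublevelComponents F u v).ncard = (sublevelComponents G u v).ncard)
    {u p v : α × β} (hup₁ : u.1 < p.1) (hup₂ : u.2 < p.2) (hpv₁ : p.1 < v.1) (hpv₂ : p.2 < v.2) :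
    cornerCount F u p v = cornerCount G u p v := by
  rw [cornerCount, cornerCount, h p v hpv₁ hpv₂, h u v (hup₁.trans hpv₁) (hup₂.trans hpv₂),
    h (u.1, p.2) v (hup₁.trans hpv₁) hpv₂, h (p.1, u.2) v hpv₁ (hup₂.trans hpv₂)]

variable [TopologicalSpace α] [TopologicalSpace β] [OrderClosedTopology α] [OrderClosedTopology β]
  {F : X → α × β} {u p v : α × β}

lemma finite_sublevelComponents [CompactSpace X] [LocallyConnectedSpace X] (hF : Continuous F)
    (h₁ : u.1 < v.1) (h₂ : u.2 < v.2) : (sublevelComponents F u v).Finite := by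
  refine finite_image_connectedComponentIn ((isClosed_Iic.preimage hF).isCompact) ?_
  have hopen : IsOpen (F ⁻¹' Iio v.1 ×ˢ Iio v.2) := (isOpen_Iio.prod isOpen_Iio).preimage hF
  refine Subset.trans ?_ (interior_maximal ?_ hopen)
  · exact fun z hz ↦ ⟨hz.1.trans_lt h₁, hz.2.trans_lt h₂⟩
  · exact fun z hz ↦ ⟨le_of_lt hz.1, le_of_lt hz.2⟩

lemma exists_mem_Ioc_prod_of_mem_sublevelComponents (hF : Continuous F)
    (hup : u ≤ p) (hpv : p ≤ v) {K : Set X} (hK₁ : K ∈ sublevelComponents F (u.1, p.2) v)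
    (hK₂ : K ∈ sublevelComponents F (p.1, u.2) v) (hK : K ∉ sublevelComponents F u v) :
    ∃ z ∈ K, F z ∈ Ioc u.1 v.1 ×ˢ Ioc u.2 v.2 := by
  by_contra! hempty
  have hKv : K ⊆ F ⁻¹' Iic v := by
    obtain ⟨z, -, rfl⟩ := hK₁
    exact connectedComponentIn_subset _ z
  have hconn : IsPreconnected K := by
    obtain ⟨z, -, rfl⟩ := hK₁
    exact isPreconnected_connectedComponentIn
  have hleft : (u.1, p.2) ≤ v := ⟨hup.1.trans hpv.1, hpv.2⟩
  have hbelow : (p.1, u.2) ≤ v := ⟨hpv.1, hup.2.trans hpv.2⟩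
  obtain ⟨x, hxK, hx⟩ := exists_mem_le_of_mem_sublevelComponents hleft hK₁
  obtain ⟨y, hyK, hy⟩ := exists_mem_le_of_mem_sublevelComponents hbelow hK₂
  obtain ⟨z, hzK, hz₁, hz₂⟩ := isPreconnected_closed_iff.1 hconn
    {z | (F z).1 ≤ u.1} {z | (F z).2 ≤ u.2}
    (isClosed_Iic.preimage hF.fst) (isClosed_Iic.preimage hF.snd)
    (fun z hz ↦ by
      by_contra! h
      rw [mem_union, not_or] at h
      exact hempty z hz ⟨⟨not_le.1 h.1, (hKv hz).1⟩, ⟨not_le.1 h.2, (hKv hz).2⟩⟩)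
    ⟨x, hxK, hx.1⟩ ⟨y, hyK, hy.2⟩
  exact hK (mem_sublevelComponents_of_le hK₁ hzK ⟨hz₁, hz₂⟩)

variable [CompactSpace X] [LocallyConnectedSpace X]

lemma cornerCount_eq_ncard_sdiff (hF : Continuous F) (hup : u ≤ p) (h₁ : p.1 < v.1)
    (h₂ : p.2 < v.2)
    (hinter : sublevelComponents F (u.1, p.2) v ∩ sublevelComponents F (p.1, u.2) v ⊆
      sublevelComponents F u v) :
    cornerCount F u p v = (sublevelComponents F p v \
      (sublevelComponents F (u.1, p.2) v ∪ sublevelComponents F (p.1, u.2) v)).ncard := by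
  have hinter' := hinter.antisymm (subset_inter
    (sublevelComponents_mono (show u ≤ (u.1, p.2) from ⟨le_rfl, hup.2⟩))
    (sublevelComponents_mono (show u ≤ (p.1, u.2) from ⟨hup.1, le_rfl⟩)))
  have hunion : sublevelComponents F (u.1, p.2) v ∪ sublevelComponents F (p.1, u.2) v ⊆
      sublevelComponents F p v := union_subset
    (sublevelComponents_mono (show (u.1, p.2) ≤ p from ⟨hup.1, le_rfl⟩))
    (sublevelComponents_mono (show (p.1, u.2) ≤ p from ⟨le_rfl, hup.2⟩))
  have hfin := finite_sublevelComponents hF h₁ h₂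
  have hincl := ncard_union_add_ncard_inter _ _ (hfin.subset (subset_union_left.trans hunion))
    (hfin.subset (subset_union_right.trans hunion))
  have hdiff := ncard_sdiff_add_ncard_of_subset hunion hfin
  rw [hinter'] at hincl
  rw [cornerCount]
  lia

lemma cornerCount_eq_zero (hF : Continuous F) (hup : u ≤ p) (h₁ : p.1 < v.1) (h₂ : p.2 < v.2)
    (hempty : ∀ z, F z ∉ Ioc u.1 v.1 ×ˢ Ioc u.2 v.2) : cornerCount F u p v = 0 := by
  have hpv : p ≤ v := ⟨h₁.le, h₂.le⟩
  rw [cornerCount_eq_ncard_sdiff hF hup h₁ h₂, sdiff_eq_empty.2, ncard_empty, Nat.cast_zero]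
  · rintro _ ⟨z, hz, rfl⟩
    by_cases hz₁ : (F z).1 ≤ u.1
    · exact .inl ⟨z, ⟨hz₁, hz.2⟩, rfl⟩
    · refine .inr ⟨z, ⟨hz.1, not_lt.1 fun hz₂ ↦ hempty z ?_⟩, rfl⟩
      exact ⟨⟨not_le.1 hz₁, hz.1.trans h₁.le⟩, ⟨hz₂, hz.2.trans h₂.le⟩⟩
  · rintro K ⟨hK₁, hK₂⟩
    by_contra hK
    obtain ⟨z, -, hz⟩ := exists_mem_Ioc_prod_of_mem_sublevelComponents hF hup hpv hK₁ hK₂ hK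
    exact hempty z hz

lemma cornerCount_eq_one (hF : Continuous F) {x : X} (hu₁ : u.1 < (F x).1) (hu₂ : u.2 < (F x).2)
    (hv₁ : (F x).1 < v.1) (hv₂ : (F x).2 < v.2)
    (hrect : ∀ z, F z ∈ Ioc u.1 v.1 ×ˢ Ioc u.2 v.2 → z ∈ connectedComponentIn (F ⁻¹' Iic v) x)
    (hmin : ∀ z ∈ connectedComponentIn (F ⁻¹' Iic v) x, F z ≤ F x → F z = F x) :
    cornerCount F u (F x) v = 1 := by
  have hup : u ≤ F x := ⟨hu₁.le, hu₂.le⟩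
  have hpv : F x ≤ v := ⟨hv₁.le, hv₂.le⟩
  set K := connectedComponentIn (F ⁻¹' Iic v) x
  have hleft : (u.1, (F x).2) ≤ F x := ⟨hup.1, le_rfl⟩
  have hbelow : ((F x).1, u.2) ≤ F x := ⟨le_rfl, hup.2⟩
  have hK₁ : K ∉ sublevelComponents F (u.1, (F x).2) v := fun h ↦ by
    obtain ⟨z, hzK, hz⟩ := exists_mem_le_of_mem_sublevelComponents (hleft.trans hpv) h
    exact hu₁.not_ge (hmin z hzK (hz.trans hleft) ▸ hz.1)
  have hK₂ : K ∉ sublevelComponents F ((F x).1, u.2) v := fun h ↦ by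
    obtain ⟨z, hzK, hz⟩ := exists_mem_le_of_mem_sublevelComponents (hbelow.trans hpv) h
    exact hu₂.not_ge (hmin z hzK (hz.trans hbelow) ▸ hz.2)
  rw [cornerCount_eq_ncard_sdiff hF hup hv₁ hv₂, Nat.cast_eq_one, ncard_eq_one]
  · refine ⟨K, subset_antisymm ?_ (singleton_subset_iff.2 ⟨⟨x, le_refl (F x), rfl⟩, ?_⟩)⟩
    · rintro _ ⟨⟨z, hz, rfl⟩, hnot⟩
      rw [mem_union, not_or] at hnot
      suffices hzK : z ∈ K from (connectedComponentIn_eq hzK).symm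
      refine hrect z ⟨⟨?_, hz.1.trans hv₁.le⟩, ?_, hz.2.trans hv₂.le⟩
      · exact not_le.1 fun h ↦ hnot.1 ⟨z, ⟨h, hz.2⟩, rfl⟩
      · exact not_le.1 fun h ↦ hnot.2 ⟨z, ⟨hz.1, h⟩, rfl⟩
    · exact not_or.2 ⟨hK₁, hK₂⟩
  · rintro L ⟨hL₁, hL₂⟩
    by_contra hL
    obtain ⟨z, hzL, hz⟩ := exists_mem_Ioc_prod_of_mem_sublevelComponents hF hup hpv hL₁ hL₂ hL
    refine hK₁ ?_
    rwa [show K = _ from connectedComponentIn_eq (hrect z hz),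
      ← eq_connectedComponentIn_of_mem_sublevelComponents hL₁ hzL]

end SublevelSets

section Detection

variable {X : Type*} [TopologicalSpace X] {F : X → ℝ × ℝ} {p : ℝ × ℝ} {C : Set X}

lemma eventually_forall_not_le_add (hC : IsCompact C) (hF : Continuous F)
    (hp : ∀ z ∈ C, ¬F z ≤ p) : ∀ᶠ r : ℝ in 𝓝 0, ∀ z ∈ C, ¬F z ≤ p + (r, r) := by
  refine hC.eventually_forall_of_forall_eventually fun z hz ↦ ?_
  have hcont : Continuous fun q : ℝ × X ↦ p + (q.1, q.1) := by fun_prop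
  refine (isClosed_le (hF.comp continuous_snd) hcont).isOpen_compl.mem_nhds ?_
  simpa [← Prod.zero_eq_mk] using hp z hz

lemma eventually_forall_notMem_Icc (hC : IsCompact C) (hF : Continuous F)
    (hp : ∀ z ∈ C, F z ≠ p) :
    ∀ᶠ r : ℝ in 𝓝 0, ∀ z ∈ C, F z ∉ Icc (p - (r, r)) (p + (r, r)) := by
  refine hC.eventually_forall_of_forall_eventually fun z hz ↦ ?_
  have hcont₁ : Continuous fun q : ℝ × X ↦ p - (q.1, q.1) := by fun_prop
  have hcont₂ : Continuous fun q : ℝ × X ↦ p + (q.1, q.1) := by fun_prop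
  have hF' : Continuous fun q : ℝ × X ↦ F q.2 := hF.comp continuous_snd
  refine ((isClosed_le hcont₁ hF').inter (isClosed_le hF' hcont₂)).isOpen_compl.mem_nhds ?_
  simpa [← Prod.zero_eq_mk] using fun h h' ↦ hp z hz (le_antisymm h' h)

variable [CompactSpace X] [LocallyConnectedSpace X]

lemma eventually_cornerCount_eq_zero (hF : Continuous F) (hp : p ∉ range F) :
    ∀ᶠ r : ℝ in 𝓝[>] 0, cornerCount F (p - (r, r)) p (p + (r, r)) = 0 := by
  filter_upwards [self_mem_nhdsWithin, nhdsWithin_le_nhds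
    (eventually_forall_notMem_Icc isCompact_univ hF fun z _ h ↦ hp ⟨z, h⟩)] with r hr hbox
  have hr₀ : 0 < r := hr
  refine cornerCount_eq_zero hF ?_ ?_ ?_ fun z hz ↦ hbox z trivial ?_
  · exact ⟨by simpa using hr₀.le, by simpa using hr₀.le⟩
  · simpa using hr₀
  · simpa using hr₀
  · exact ⟨⟨hz.1.1.le, hz.2.1.le⟩, hz.1.2, hz.2.2⟩

lemma eventually_cornerCount_eq_one (hF : Continuous F) {x : X} {N : Set X} (hN : N ∈ 𝓝 x)
    (hNclosed : IsClosed N) (hconn : ∀ v, IsPreconnected (N ∩ F ⁻¹' Iic v))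
    (hmin : ∀ z ∈ N, F z ≤ F x → z = x) (hsimple : ∀ z, F z = F x → z = x) :
    ∀ᶠ r : ℝ in 𝓝[>] 0, cornerCount F (F x - (r, r)) (F x) (F x + (r, r)) = 1 := by
  have hx : x ∈ interior N := mem_interior_iff_mem_nhds.2 hN
  have hfrontier := eventually_forall_not_le_add isClosed_frontier.isCompact hF
    fun z (hz : z ∈ frontier N) hzx ↦
      hz.2 (hmin z (hNclosed.frontier_subset hz) hzx ▸ hx)
  have hbox := eventually_forall_notMem_Icc isOpen_interior.isClosed_compl.isCompact hF
    fun z (hz : z ∈ (interior N)ᶜ) hzx ↦ hz (hsimple z hzx ▸ hx)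
  filter_upwards [self_mem_nhdsWithin, nhdsWithin_le_nhds hfrontier, nhdsWithin_le_nhds hbox]
    with r hr hfrontier hbox
  have hr₀ : 0 < r := hr
  have hxv : F x ≤ F x + (r, r) := ⟨by simpa using hr₀.le, by simpa using hr₀.le⟩
  refine cornerCount_eq_one hF (by simpa) (by simpa) (by simpa) (by simpa) ?_ ?_
  · intro z hz
    have hzN : z ∈ N := interior_subset
      (by_contra fun h ↦ hbox z h ⟨⟨hz.1.1.le, hz.2.1.le⟩, hz.1.2, hz.2.2⟩)
    exact (hconn _).subset_connectedComponentIn ⟨mem_of_mem_nhds hN, hxv⟩ inter_subset_right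
      ⟨hzN, hz.1.2, hz.2.2⟩
  · intro z hz hzx
    have hdisj : Disjoint (frontier N) (F ⁻¹' Iic (F x + (r, r))) := disjoint_left.2 hfrontier
    rw [hmin z (connectedComponentIn_subset_of_disjoint_frontier (mem_of_mem_nhds hN) hdisj hz) hzx]

lemma mem_range_of_ncard_sublevelComponents_eq {Y : Type*} [TopologicalSpace Y] [CompactSpace Y]
    [LocallyConnectedSpace Y] {G : Y → ℝ × ℝ} (hF : Continuous F) (hG : Continuous G)
    (h : ∀ u v : ℝ × ℝ, u.1 < v.1 → u.2 < v.2 →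
      (sublevelComponents F u v).ncard = (sublevelComponents G u v).ncard)
    {x : X} {N : Set X} (hN : N ∈ 𝓝 x) (hNclosed : IsClosed N)
    (hconn : ∀ v, IsPreconnected (N ∩ F ⁻¹' Iic v))
    (hmin : ∀ z ∈ N, F z ≤ F x → z = x) (hsimple : ∀ z, F z = F x → z = x) :
    F x ∈ range G := by
  by_contra hx
  obtain ⟨r, hone, hzero, hr⟩ := ((eventually_cornerCount_eq_one hF hN hNclosed hconn hmin
    hsimple).and ((eventually_cornerCount_eq_zero hG hx).and self_mem_nhdsWithin)).exists
  have hr₀ : 0 < r := hr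
  rw [cornerCount_congr h (by simpa) (by simpa) (by simpa) (by simpa), hzero] at hone
  exact zero_ne_one hone

end Detection

instance : Fact (0 < 2 * π) := ⟨Real.two_pi_pos⟩

instance : LocallyConnectedSpace Circ :=
  isQuotientMap_quot_mk.isCoinducing.locallyConnectedSpace

instance : Nontrivial Circ :=
  have := (Ico_infinite (lt_add_of_pos_right 0 Real.two_pi_pos)).nontrivial.coe_sort
  (AddCircle.equivIco (2 * π) 0).nontrivial

section Cross

lemma cross_swap_args (a b : ℝ × ℝ) : cross a b = -cross b a := by
  simp only [cross]
  ring

lemma cross_eq_zero_comm {a b : ℝ × ℝ} : cross a b = 0 ↔ cross b a = 0 := by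
  rw [cross_swap_args, neg_eq_zero]

lemma cross_eq_zero_trans {a b c : ℝ × ℝ} (hb : b ≠ 0) (hab : cross a b = 0)
    (hbc : cross b c = 0) : cross a c = 0 := by
  simp only [cross] at *
  have h₁ : b.1 * (a.1 * c.2 - a.2 * c.1) = 0 := by linear_combination a.1 * hbc + c.1 * hab
  have h₂ : b.2 * (a.1 * c.2 - a.2 * c.1) = 0 := by linear_combination a.2 * hbc + c.2 * hab
  by_contra hac
  exact hb (Prod.ext ((mul_eq_zero.1 h₁).resolve_right hac) ((mul_eq_zero.1 h₂).resolve_right hac))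

lemma cross_map (L : ℝ × ℝ →ₗ[ℝ] ℝ × ℝ) (a b : ℝ × ℝ) :
    cross (L a) (L b) = cross a b * cross (L (1, 0)) (L (0, 1)) := by
  have hL (c : ℝ × ℝ) : L c = c.1 • L (1, 0) + c.2 • L (0, 1) := by
    rw [← map_smul, ← map_smul, ← map_add]
    simp
  rw [hL a, hL b]
  simp only [cross, Prod.fst_add, Prod.snd_add, Prod.smul_fst, Prod.smul_snd, smul_eq_mul]
  ring

lemma cross_map_eq_zero (L : (ℝ × ℝ) ≃L[ℝ] ℝ × ℝ) {a b : ℝ × ℝ} :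
    cross (L a) (L b) = 0 ↔ cross a b = 0 := by
  have h := cross_map L.toLinearEquiv.toLinearMap a b
  have hsymm := cross_map L.symm.toLinearEquiv.toLinearMap (L a) (L b)
  simp only [LinearEquiv.coe_coe, ContinuousLinearEquiv.coe_toLinearEquiv,
    ContinuousLinearEquiv.symm_apply_apply] at h hsymm
  constructor <;> intro h₀
  · rw [hsymm, h₀, zero_mul]
  · rw [h, h₀, zero_mul]

lemma span_singleton_eq_of_cross_eq_zero {a b : ℝ × ℝ} (ha : a ≠ 0) (hb : b ≠ 0)
    (h : cross a b = 0) : Submodule.span ℝ {a} = Submodule.span ℝ {b} := by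
  have hne : a.1 ^ 2 + a.2 ^ 2 ≠ 0 := fun h₀ ↦ by
    rw [add_eq_zero_iff_of_nonneg (sq_nonneg _) (sq_nonneg _), sq_eq_zero_iff, sq_eq_zero_iff] at h₀
    exact ha (Prod.ext h₀.1 h₀.2)
  have hsmul : ((a.1 * b.1 + a.2 * b.2) / (a.1 ^ 2 + a.2 ^ 2)) • a = b := by
    rw [cross] at h
    ext
    · simp only [Prod.smul_fst, smul_eq_mul]
      field_simp
      linear_combination a.2 * h
    · simp only [Prod.smul_snd, smul_eq_mul]
      field_simp
      linear_combination -a.1 * h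
  rw [Submodule.span_singleton_eq_span_singleton]
  refine ⟨Units.mk0 _ (fun h₀ ↦ hb ?_), hsmul⟩
  rw [← hsmul, h₀, zero_smul]

end Cross

section Velocity

/-- The derivative of a closed curve with respect to the angle, as a function on the circle. -/
def velocity (F : Circ → ℝ × ℝ) (x : Circ) : ℝ × ℝ := deriv (fun t : ℝ ↦ F (x + t)) 0

variable {F G : Circ → ℝ × ℝ} {x y : Circ}

lemma velocity_coe (F : Circ → ℝ × ℝ) (t : ℝ) : velocity F t = deriv (liftOf F) t := by
  simpa [velocity, liftOf] using deriv_comp_const_add (liftOf F) t 0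

lemma IsC1.hasStrictDerivAt (hF : IsC1 F) (t : ℝ) :
    HasStrictDerivAt (liftOf F) (velocity F t) t := by
  rw [velocity_coe]
  exact (ContDiff.contDiffAt hF).hasStrictDerivAt one_ne_zero

lemma IsC1.hasStrictDerivAt_map {E : Type*} [NormedAddCommGroup E] [NormedSpace ℝ E]
    (L : ℝ × ℝ →L[ℝ] E) (hF : IsC1 F) (t : ℝ) :
    HasStrictDerivAt (fun s : ℝ ↦ L (F s)) (L (velocity F t)) t :=
  L.hasStrictFDerivAt.comp_hasStrictDerivAt t (hF.hasStrictDerivAt t)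

lemma IsC1.continuous (hF : IsC1 F) : Continuous F :=
  continuous_coinduced_dom.2 (ContDiff.continuous hF)

lemma IsC1.continuous_velocity (hF : IsC1 F) : Continuous (velocity F) := by
  refine continuous_coinduced_dom.2 ?_
  exact (ContDiff.continuous_deriv_one hF).congr fun t ↦ (velocity_coe F t).symm

lemma IsC1.comp_linear (L : ℝ × ℝ →L[ℝ] ℝ × ℝ) (hF : IsC1 F) : IsC1 (L ∘ F) :=
  L.contDiff.comp hF

lemma IsC1.velocity_comp (L : ℝ × ℝ →L[ℝ] ℝ × ℝ) (hF : IsC1 F) (x : Circ) :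
    velocity (L ∘ F) x = L (velocity F x) := by
  obtain ⟨t, rfl⟩ := QuotientAddGroup.mk_surjective x
  rw [velocity_coe]
  exact (hF.hasStrictDerivAt_map L t).hasDerivAt.deriv

/-- The curves `F` and `G` pass through the same point at `x` and `y`, with parallel velocities. -/
def IsTangent (F G : Circ → ℝ × ℝ) (x y : Circ) : Prop :=
  F x = G y ∧ cross (velocity F x) (velocity G y) = 0

lemma IsTangent.symm (h : IsTangent F G x y) : IsTangent G F y x :=
  ⟨h.1.symm, cross_eq_zero_comm.1 h.2⟩

lemma isClosed_setOf_isTangent (hF : IsC1 F) (hG : IsC1 G) :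
    IsClosed {z : Circ × Circ | IsTangent F G z.1 z.2} := by
  have := hF.continuous
  have := hG.continuous
  have := hF.continuous_velocity
  have := hG.continuous_velocity
  refine (isClosed_eq (by fun_prop) (by fun_prop)).inter (isClosed_eq ?_ continuous_const)
  unfold cross
  fun_prop

lemma isTangent_comp_iff (L : (ℝ × ℝ) ≃L[ℝ] ℝ × ℝ) (hF : IsC1 F) (hG : IsC1 G) :
    IsTangent (L ∘ F) (L ∘ G) x y ↔ IsTangent F G x y := by
  have hvF : velocity (L ∘ F) x = L (velocity F x) := hF.velocity_comp L x
  have hvG : velocity (L ∘ G) y = L (velocity G y) := hG.velocity_comp L y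
  rw [IsTangent, IsTangent, hvF, hvG, cross_map_eq_zero, Function.comp_apply,
    Function.comp_apply, L.injective.eq_iff]

/-- A `C¹` immersion of the circle all of whose multiple points are clean. Unlike in `Generic`,
there may be infinitely many multiple points, of any multiplicity. -/
structure IsCleanImmersion (F : Circ → ℝ × ℝ) : Prop where
  isC1 : IsC1 F
  velocity_ne_zero : ∀ x, velocity F x ≠ 0
  eq_of_isTangent : ∀ x y, IsTangent F F x y → x = y

lemma Generic.isCleanImmersion (hF : Generic F) : IsCleanImmersion F where
  isC1 := hF.1
  velocity_ne_zero x := by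
    obtain ⟨t, rfl⟩ := QuotientAddGroup.mk_surjective x
    exact velocity_coe F t ▸ hF.2.1 t
  eq_of_isTangent x y h := by
    obtain ⟨t, rfl⟩ := QuotientAddGroup.mk_surjective x
    obtain ⟨s, rfl⟩ := QuotientAddGroup.mk_surjective y
    refine hF.2.2.2.2 t s h.1 (span_singleton_eq_of_cross_eq_zero (hF.2.1 t) (hF.2.1 s) ?_)
    simpa only [velocity_coe] using h.2

namespace IsCleanImmersion

lemma comp_linearEquiv (L : (ℝ × ℝ) ≃L[ℝ] ℝ × ℝ) (hF : IsCleanImmersion F) :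
    IsCleanImmersion (L ∘ F) where
  isC1 := hF.isC1.comp_linear (L : ℝ × ℝ →L[ℝ] ℝ × ℝ)
  velocity_ne_zero x := by
    rw [show velocity (L ∘ F) x = L (velocity F x) from hF.isC1.velocity_comp L x]
    simpa using hF.velocity_ne_zero x
  eq_of_isTangent x y h := hF.eq_of_isTangent x y ((isTangent_comp_iff L hF.isC1 hF.isC1).1 h)

lemma eq_right_of_isTangent {y' : Circ} (hF : IsCleanImmersion F) (hG : IsCleanImmersion G)
    (h : IsTangent F G x y) (h' : IsTangent F G x y') : y = y' :=
  hG.eq_of_isTangent y y' ⟨h.1.symm.trans h'.1,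
    cross_eq_zero_trans (hF.velocity_ne_zero x) (cross_eq_zero_comm.1 h.2) h'.2⟩

end IsCleanImmersion

end Velocity

section Crossings

lemma eventually_nhds_prod_coe_iff {P : Circ × Circ → Prop} {t s : ℝ} :
    (∀ᶠ z in 𝓝 ((t : Circ), (s : Circ)), P z) ↔
      ∀ᶠ z : ℝ × ℝ in 𝓝 (t, s), P ((z.1 : Circ), (z.2 : Circ)) := by
  rw [nhds_prod_eq, QuotientAddGroup.nhds_eq, QuotientAddGroup.nhds_eq, prod_map_map_eq,
    eventually_map, nhds_prod_eq]

lemma eventually_ne_of_cross_ne_zero {f g : ℝ → ℝ × ℝ} {a b : ℝ × ℝ} {t₀ s₀ : ℝ}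
    (hf : HasDerivAt f a t₀) (hg : HasDerivAt g b s₀) (h : cross a b ≠ 0) :
    ∀ᶠ z in 𝓝[≠] (t₀, s₀), f z.1 ≠ g z.2 := by
  let L : ℝ × ℝ →L[ℝ] ℝ × ℝ := ((ContinuousLinearMap.fst ℝ ℝ ℝ).smulRight a) -
    ((ContinuousLinearMap.snd ℝ ℝ ℝ).smulRight b)
  have hf' : HasFDerivAt (fun z : ℝ × ℝ ↦ f z.1) _ (t₀, s₀) :=
    HasFDerivAt.comp (t₀, s₀) (g := f) hf.hasFDerivAt hasFDerivAt_fst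
  have hg' : HasFDerivAt (fun z : ℝ × ℝ ↦ g z.2) _ (t₀, s₀) :=
    HasFDerivAt.comp (t₀, s₀) (g := g) hg.hasFDerivAt hasFDerivAt_snd
  have hderiv : HasFDerivAt (fun z : ℝ × ℝ ↦ f z.1 - g z.2) L (t₀, s₀) := hf'.sub hg'
  have hker : LinearMap.ker L.toLinearMap = ⊥ := by
    refine LinearMap.ker_eq_bot'.2 fun z hz ↦ ?_
    have h₁ : z.1 * a.1 - z.2 * b.1 = 0 := congrArg Prod.fst hz
    have h₂ : z.1 * a.2 - z.2 * b.2 = 0 := congrArg Prod.snd hz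
    have hz₁ : z.1 * cross a b = 0 := by rw [cross]; linear_combination b.2 * h₁ - b.1 * h₂
    have hz₂ : z.2 * cross a b = 0 := by rw [cross]; linear_combination a.2 * h₁ - a.1 * h₂
    exact Prod.ext ((mul_eq_zero.1 hz₁).resolve_right h) ((mul_eq_zero.1 hz₂).resolve_right h)
  obtain ⟨K, -, hK⟩ := LinearMap.exists_antilipschitzWith L.toLinearMap hker
  filter_upwards [hderiv.eventually_ne (c := 0) ⟨K, hK⟩] with z hz using sub_ne_zero.1 hz

variable {F G : Circ → ℝ × ℝ} {x y : Circ}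

lemma eventually_eq_imp_eq_of_not_isTangent (hF : IsC1 F) (hG : IsC1 G) (h : ¬IsTangent F G x y) :
    ∀ᶠ z in 𝓝 (x, y), F z.1 = G z.2 → z = (x, y) := by
  by_cases hxy : F x = G y
  · obtain ⟨t, rfl⟩ := QuotientAddGroup.mk_surjective x
    obtain ⟨s, rfl⟩ := QuotientAddGroup.mk_surjective y
    refine eventually_nhds_prod_coe_iff.2 ?_
    have := eventually_ne_of_cross_ne_zero (hF.hasStrictDerivAt t).hasDerivAt
      (hG.hasStrictDerivAt s).hasDerivAt fun hc ↦ h ⟨hxy, hc⟩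
    filter_upwards [eventually_nhdsWithin_iff.1 this] with z hz hFG
    rw [not_not.1 fun hne ↦ hz hne hFG]
  · have hF' := hF.continuous
    have hG' := hG.continuous
    have hopen : IsOpen {z : Circ × Circ | F z.1 ≠ G z.2} :=
      isOpen_ne_fun (by fun_prop) (by fun_prop)
    filter_upwards [hopen.mem_nhds hxy] with z hz hFG using absurd hFG hz

lemma eventually_forall_eq_imp_eq (hF : IsC1 F) (hG : IsC1 G) {C : Set Circ} (hC : IsCompact C)
    (h : ∀ y ∈ C, ¬IsTangent F G x y) : ∀ᶠ x' in 𝓝 x, ∀ y ∈ C, F x' = G y → x' = x :=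
  hC.eventually_forall_of_forall_eventually fun y hy ↦
    (eventually_eq_imp_eq_of_not_isTangent hF hG (h y hy)).mono
      fun _ hz hFG ↦ congrArg Prod.fst (hz hFG)

lemma exists_isTangent_of_frequently_mem_range (hF : IsC1 F) (hG : IsC1 G)
    (h : ∃ᶠ x' in 𝓝[≠] x, F x' ∈ range G) : ∃ y, IsTangent F G x y := by
  by_contra! hnot
  refine h (eventually_nhdsWithin_iff.2 ?_)
  filter_upwards [eventually_forall_eq_imp_eq hF hG isCompact_univ fun y _ ↦ hnot y]
  rintro x' hx' hne ⟨y, hy⟩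
  exact hne (hx' y trivial hy.symm)

lemma eventually_map_eq_imp_eq {E : Type*} [NormedAddCommGroup E] [NormedSpace ℝ E]
    (L : ℝ × ℝ →L[ℝ] E) (hF : IsC1 F) (hv : L (velocity F x) ≠ 0) :
    ∀ᶠ z in 𝓝 (x, x), L (F z.1) = L (F z.2) → z.1 = z.2 := by
  obtain ⟨t, rfl⟩ := QuotientAddGroup.mk_surjective x
  refine eventually_nhds_prod_coe_iff.2 ?_
  have hO := (HasDerivAtFilter.isTheta_sub (hF.hasStrictDerivAt_map L t) hv).isBigO_symm
  filter_upwards [hO.eq_zero_imp] with z hz hFz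
  rw [sub_eq_zero.1 (hz (sub_eq_zero.2 hFz))]

namespace IsCleanImmersion

lemma eventually_mem_range_imp_mem_image (hF : IsCleanImmersion F) (hG : IsCleanImmersion G)
    (h : IsTangent F G x y) {W : Set Circ} (hW : W ∈ 𝓝 y) :
    ∀ᶠ x' in 𝓝 x, F x' ∈ range G → F x' ∈ G '' W := by
  have hy : y ∈ interior W := mem_interior_iff_mem_nhds.2 hW
  filter_upwards [eventually_forall_eq_imp_eq hF.isC1 hG.isC1
    isOpen_interior.isClosed_compl.isCompact
    fun y' hy' h' ↦ hy' (hF.eq_right_of_isTangent hG h h' ▸ hy)]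
  rintro x' hx' ⟨y', hy'⟩
  by_cases hW' : y' ∈ interior W
  · exact ⟨y', interior_subset hW', hy'⟩
  · exact ⟨y, mem_of_mem_nhds hW, by rw [← h.1, hx' y' hW' hy'.symm]⟩

lemma eventually_forall_eq_imp_eq_self (hF : IsCleanImmersion F) (x : Circ) :
    ∀ᶠ x' in 𝓝[≠] x, ∀ y, F y = F x' → y = x' := by
  refine eventually_nhdsWithin_iff.2 ?_
  refine (isCompact_univ.eventually_forall_of_forall_eventually (x₀ := x)
    (P := fun x' y ↦ F y = F x' → y = x' ∨ x' = x) fun y _ ↦ ?_).mono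
    fun x' h hne y hy ↦ (h y trivial hy).resolve_right hne
  obtain rfl | hxy := eq_or_ne x y
  · filter_upwards [eventually_map_eq_imp_eq (.id ℝ _) hF.isC1 (hF.velocity_ne_zero x)]
      with z hz hFz using .inl (hz hFz.symm).symm
  · filter_upwards [eventually_eq_imp_eq_of_not_isTangent hF.isC1 hF.isC1
      fun h ↦ hxy (hF.eq_of_isTangent x y h)]
      with z hz hFz using .inr (congrArg Prod.fst (hz hFz.symm))

end IsCleanImmersion

end Crossings

section AntitoneArcs

lemma eventually_smallSets_strictMonoOn {φ : ℝ → ℝ} {φ' t : ℝ} (hφ : HasStrictDerivAt φ φ' t)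
    (hpos : 0 < φ') : ∀ᶠ S in (𝓝 t).smallSets, StrictMonoOn φ S := by
  obtain ⟨W, hW, hbound⟩ := eventually_prod_self_iff'.1
    (nhds_prod_eq (x := t) (y := t) ▸ hφ.isLittleO.bound (half_pos hpos))
  refine eventually_smallSets.2 ⟨W, hW, fun S hS r hr s hs hrs ↦ ?_⟩
  have h := hbound r (hS hr) s (hS hs)
  rw [Real.norm_eq_abs, Real.norm_eq_abs, abs_of_neg (sub_neg.2 hrs),
    ContinuousLinearMap.toSpanSingleton_apply, smul_eq_mul] at h
  nlinarith [(abs_le.1 h).2]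

lemma eventually_smallSets_strictAntiOn {φ : ℝ → ℝ} {φ' t : ℝ} (hφ : HasStrictDerivAt φ φ' t)
    (hneg : φ' < 0) : ∀ᶠ S in (𝓝 t).smallSets, StrictAntiOn φ S :=
  (eventually_smallSets_strictMonoOn hφ.neg (neg_pos.2 hneg)).mono fun S hS ↦ by
    simpa using hS.neg

variable {f : ℝ → ℝ × ℝ} {S : Set ℝ} {t : ℝ}

lemma convex_inter_preimage_Iic (h₁ : QuasiconvexOn ℝ S fun s ↦ (f s).1)
    (h₂ : QuasiconvexOn ℝ S fun s ↦ (f s).2) (v : ℝ × ℝ) : Convex ℝ (S ∩ f ⁻¹' Iic v) := by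
  convert (h₁ v.1).inter (h₂ v.2) using 1
  exact inter_inter_distrib_left S {s | (f s).1 ≤ v.1} {s | (f s).2 ≤ v.2}

lemma eventually_smallSets_descending {f' : ℝ × ℝ} (hf : HasStrictDerivAt f f' t)
    (h : f'.1 * f'.2 < 0) :
    ∀ᶠ S in (𝓝 t).smallSets, Convex ℝ S → (∀ v, Convex ℝ (S ∩ f ⁻¹' Iic v)) ∧
      (t ∈ S → ∀ s ∈ S, f s ≤ f t → s = t) := by
  have h₁ : HasStrictDerivAt (fun s ↦ (f s).1) f'.1 t :=
    (ContinuousLinearMap.fst ℝ ℝ ℝ).hasStrictFDerivAt.comp_hasStrictDerivAt t hf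
  have h₂ : HasStrictDerivAt (fun s ↦ (f s).2) f'.2 t :=
    (ContinuousLinearMap.snd ℝ ℝ ℝ).hasStrictFDerivAt.comp_hasStrictDerivAt t hf
  obtain ⟨hpos, hneg⟩ | ⟨hneg, hpos⟩ := mul_neg_iff.1 h
  · filter_upwards [eventually_smallSets_strictMonoOn h₁ hpos,
      eventually_smallSets_strictAntiOn h₂ hneg] with S hmono hanti hS
    exact ⟨convex_inter_preimage_Iic (hmono.monotoneOn.quasiconvexOn hS)
      (hanti.antitoneOn.quasiconvexOn hS), fun ht s hs hst ↦
      le_antisymm ((hmono.le_iff_le hs ht).1 hst.1) ((hanti.le_iff_ge hs ht).1 hst.2)⟩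
  · filter_upwards [eventually_smallSets_strictAntiOn h₁ hneg,
      eventually_smallSets_strictMonoOn h₂ hpos] with S hanti hmono hS
    exact ⟨convex_inter_preimage_Iic (hanti.antitoneOn.quasiconvexOn hS)
      (hmono.monotoneOn.quasiconvexOn hS), fun ht s hs hst ↦
      le_antisymm ((hmono.le_iff_le hs ht).1 hst.2) ((hanti.le_iff_ge hs ht).1 hst.1)⟩

variable {F G : Circ → ℝ × ℝ} {x : Circ}

lemma exists_closed_nhds_isPreconnected_inter_preimage_Iic (hF : IsC1 F)
    (h : (velocity F x).1 * (velocity F x).2 < 0) :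
    ∃ N ∈ 𝓝 x, IsClosed N ∧ (∀ v, IsPreconnected (N ∩ F ⁻¹' Iic v)) ∧
      ∀ z ∈ N, F z ≤ F x → z = x := by
  obtain ⟨t, rfl⟩ := QuotientAddGroup.mk_surjective x
  obtain ⟨η, hη, hball⟩ := Metric.nhds_basis_closedBall.smallSets.eventually_iff.1
    (eventually_smallSets_descending (hF.hasStrictDerivAt t) h)
  obtain ⟨hconv, hmin⟩ := hball (mem_powerset subset_rfl) (convex_closedBall t η)
  refine ⟨(↑) '' Metric.closedBall t η, QuotientAddGroup.isOpenMap_coe.image_mem_nhds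
    (Metric.closedBall_mem_nhds t hη), ?_, fun v ↦ ?_, ?_⟩
  · exact ((isCompact_closedBall t η).image (AddCircle.continuous_mk' _)).isClosed
  · rw [← image_inter_preimage]
    exact (hconv v).isPreconnected.image _ (AddCircle.continuous_mk' _).continuousOn
  · rintro _ ⟨s, hs, rfl⟩ hst
    rw [hmin (Metric.mem_closedBall_self hη.le) s hs hst]

end AntitoneArcs

section ObliquePoints

variable {F G : Circ → ℝ × ℝ} {x : Circ}

/-- The points of a closed curve at which its tangent line is neither horizontal nor vertical. -/
def obliquePoints (F : Circ → ℝ × ℝ) : Set Circ := {x | (velocity F x).1 ≠ 0 ∧ (velocity F x).2 ≠ 0}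

lemma isOpen_obliquePoints (hF : IsC1 F) : IsOpen (obliquePoints F) :=
  (isOpen_ne_fun hF.continuous_velocity.fst continuous_const).inter
    (isOpen_ne_fun hF.continuous_velocity.snd continuous_const)

lemma mem_range_of_persBetti_eq (hF : IsC1 F) (hG : Continuous G)
    (h : ∀ u v : ℝ × ℝ, u.1 < v.1 → u.2 < v.2 → persBetti F u v = persBetti G u v)
    (hv : (velocity F x).1 * (velocity F x).2 < 0) (hx : ∀ y, F y = F x → y = x) :
    F x ∈ range G := by
  obtain ⟨N, hN, hclosed, hconn, hmin⟩ := exists_closed_nhds_isPreconnected_inter_preimage_Iic hF hv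
  exact mem_range_of_ncard_sublevelComponents_eq hF.continuous hG h hN hclosed hconn hmin hx

/-- The reflection of the plane in the vertical axis, the generator `s₁` of `Sigma2`. -/
def reflectFst : (ℝ × ℝ) ≃L[ℝ] ℝ × ℝ :=
  (ContinuousLinearEquiv.neg ℝ).prodCongr (ContinuousLinearEquiv.refl ℝ ℝ)

lemma mapsTo_obliquePoints_range (hF : IsCleanImmersion F) (hG : Continuous G)
    (h : ∀ s ∈ ({id, ⇑reflectFst} : Set (ℝ × ℝ → ℝ × ℝ)), ∀ u v : ℝ × ℝ, u.1 < v.1 → u.2 < v.2 →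
      persBetti (s ∘ F) u v = persBetti (s ∘ G) u v) :
    MapsTo F (obliquePoints F) (range G) := by
  intro x hx
  have hsimple : ∀ᶠ x' in 𝓝[≠] x, F x' ∈ range G := by
    filter_upwards [hF.eventually_forall_eq_imp_eq_self x,
      nhdsWithin_le_nhds ((isOpen_obliquePoints hF.isC1).mem_nhds hx)] with x' hx' hoblique
    obtain hneg | hpos := lt_or_gt_of_ne (mul_ne_zero hoblique.1 hoblique.2)
    · exact mem_range_of_persBetti_eq hF.isC1 hG (h id (by simp)) hneg hx'
    · have hvel : velocity (reflectFst ∘ F) x' = reflectFst (velocity F x') :=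
        hF.isC1.velocity_comp reflectFst x'
      have hreflect : (reflectFst ∘ F) x' ∈ range (reflectFst ∘ G) :=
        mem_range_of_persBetti_eq (hF.comp_linearEquiv reflectFst).isC1
          (reflectFst.continuous.comp hG) (h reflectFst (by simp))
          (by
            rw [hvel]
            simpa [reflectFst] using hpos)
          fun y hy ↦ hx' y (reflectFst.injective hy)
      rwa [range_comp, Function.comp_apply, reflectFst.injective.mem_set_image] at hreflect
  have hclosed : IsClosed (range G) := (isCompact_range hG).isClosed
  exact hclosed.mem_of_frequently_of_tendsto hsimple.frequently
    (hF.isC1.continuous.continuousAt.mono_left nhdsWithin_le_nhds)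

end ObliquePoints

section Tracing

lemma eventuallyEq_of_ne_imp_deriv_eq {a b : ℝ → ℝ} {t₀ : ℝ}
    (ha : ∀ᶠ t in 𝓝 t₀, DifferentiableAt ℝ a t) (hb : ∀ᶠ t in 𝓝 t₀, DifferentiableAt ℝ b t)
    (h : ∀ᶠ t in 𝓝 t₀, a t ≠ b t → deriv a t = deriv b t) (h₀ : a t₀ = b t₀) : a =ᶠ[𝓝 t₀] b := by
  obtain ⟨r, hr, hball⟩ := Metric.eventually_nhds_iff_ball.1 (ha.and (hb.and h))
  have hderiv (t : ℝ) (ht : t ∈ Metric.ball t₀ r) : HasDerivAt (fun t ↦ (a t - b t) ^ 2) 0 t := by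
    obtain ⟨ha, hb, h⟩ := hball t ht
    have hsq := (ha.hasDerivAt.fun_sub hb.hasDerivAt).fun_pow 2
    obtain hab | hab := eq_or_ne (a t) (b t)
    · simpa [hab] using hsq
    · simpa [h hab] using hsq
  filter_upwards [Metric.ball_mem_nhds t₀ hr] with t ht
  have hconst := Metric.isOpen_ball.is_const_of_deriv_eq_zero (convex_ball t₀ r).isPreconnected
    (fun t ht ↦ (hderiv t ht).differentiableAt.differentiableWithinAt)
    (fun t ht ↦ (hderiv t ht).deriv) ht (Metric.mem_ball_self hr)
  rw [h₀, sub_self, zero_pow two_ne_zero, sq_eq_zero_iff] at hconst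
  exact sub_eq_zero.1 hconst

lemma exists_contDiffAt_comp_eq {a b : ℝ → ℝ} {t s : ℝ} (ha : ContDiffAt ℝ 1 a t)
    (hb : ContDiffAt ℝ 1 b s) (hb' : deriv b s ≠ 0) (h : a t = b s) :
    ∃ k : ℝ → ℝ, ContDiffAt ℝ 1 k t ∧ k t = s ∧ ∀ᶠ t' in 𝓝 t, b (k t') = a t' := by
  have hequiv := (hb.hasStrictDerivAt one_ne_zero).hasStrictFDerivAt_equiv hb'
  have hinv := hb.to_localInverse hequiv.hasFDerivAt one_ne_zero
  refine ⟨hb.localInverse hequiv.hasFDerivAt one_ne_zero ∘ a, .comp t (h ▸ hinv) ha, ?_, ?_⟩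
  · rw [Function.comp_apply, h]
    exact hb.localInverse_apply_image hequiv.hasFDerivAt one_ne_zero
  · exact (h ▸ ha.continuousAt.tendsto).eventually hequiv.eventually_right_inverse

variable {F G : Circ → ℝ × ℝ} {x y : Circ}

lemma IsTangent.fst_velocity_ne_zero (h : IsTangent F G x y) (hG : IsCleanImmersion G)
    (hv : (velocity F x).1 ≠ 0) : (velocity G y).1 ≠ 0 := by
  intro h₀
  have hc := h.2
  rw [cross, h₀, mul_zero, sub_zero, mul_eq_zero, or_iff_right hv] at hc
  exact hG.velocity_ne_zero y (Prod.ext h₀ hc)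

lemma IsCleanImmersion.eventually_fst_eq_imp_eq (hF : IsCleanImmersion F) (hG : IsCleanImmersion G)
    (hFG : MapsTo F (obliquePoints F) (range G)) (h : IsTangent F G x y)
    (hv : (velocity F x).1 ≠ 0) :
    ∀ᶠ z in 𝓝 (x, y), (F z.1).1 = (G z.2).1 → (velocity F z.1).2 ≠ 0 → F z.1 = G z.2 := by
  obtain ⟨W, hW, hinj⟩ := eventually_prod_self_iff'.1 (nhds_prod_eq (x := y) (y := y) ▸
    eventually_map_eq_imp_eq (.fst ℝ ℝ ℝ) hG.isC1 (h.fst_velocity_ne_zero hG hv))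
  have hne := hF.isC1.continuous_velocity.fst.continuousAt.eventually_ne hv
  rw [nhds_prod_eq]
  filter_upwards [((hF.eventually_mem_range_imp_mem_image hG h hW).and hne).prod_mk hW]
    with z ⟨⟨himage, hne⟩, hzW⟩ hz hsnd
  obtain ⟨y', hy', hFy'⟩ := himage (hFG ⟨hne, hsnd⟩)
  have hcoord : (G y').1 = (G z.2).1 := by rw [hFy', hz]
  have hy'z : y' = z.2 := hinj y' hy' z.2 hzW hcoord
  rw [← hFy', hy'z]

-- Near `t₀` let `k` match the first coordinates of `F` and `G`. Where the second coordinates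
-- differ, neither point can be oblique, so both second coordinates are stationary there.
lemma exists_contDiffAt_lift_of_fst_velocity_ne_zero (hF : IsCleanImmersion F)
    (hG : IsCleanImmersion G) (hFG : MapsTo F (obliquePoints F) (range G))
    (hGF : MapsTo G (obliquePoints G) (range F)) {t₀ s₀ : ℝ} (h : IsTangent F G t₀ s₀)
    (hv : (velocity F t₀).1 ≠ 0) :
    ∃ k : ℝ → ℝ, ContDiffAt ℝ 1 k t₀ ∧ k t₀ = s₀ ∧ ∀ᶠ t : ℝ in 𝓝 t₀, G (k t) = F t := by
  have hv' := h.fst_velocity_ne_zero hG hv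
  obtain ⟨k, hk, rfl, hfst⟩ := exists_contDiffAt_comp_eq (ContDiff.contDiffAt hF.isC1).fst
    (ContDiff.contDiffAt hG.isC1).fst
    ((hG.isC1.hasStrictDerivAt_map (.fst ℝ ℝ ℝ) s₀).hasDerivAt.deriv.trans_ne hv')
    (congrArg Prod.fst h.1)
  have hcoe : Tendsto (fun t : ℝ ↦ (t : Circ)) (𝓝 t₀) (𝓝 t₀) :=
    (AddCircle.continuous_mk' _).continuousAt
  have hcoe' : Tendsto (fun t ↦ (k t : Circ)) (𝓝 t₀) (𝓝 (k t₀)) :=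
    (AddCircle.continuous_mk' _).continuousAt.comp hk.continuousAt
  have hkdiff : ∀ᶠ t in 𝓝 t₀, DifferentiableAt ℝ k t :=
    (hk.eventually (by simp)).mono fun t ht ↦ ht.differentiableAt one_ne_zero
  have hFsnd (t : ℝ) := (hF.isC1.hasStrictDerivAt_map (.snd ℝ ℝ ℝ) t).hasDerivAt
  have hGsnd (t : ℝ) (ht : DifferentiableAt ℝ k t) :=
    (hG.isC1.hasStrictDerivAt_map (.snd ℝ ℝ ℝ) (k t)).hasDerivAt.comp t ht.hasDerivAt
  have hsnd : (fun t : ℝ ↦ (F t).2) =ᶠ[𝓝 t₀] fun t ↦ (G (k t)).2 := by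
    refine eventuallyEq_of_ne_imp_deriv_eq (.of_forall fun t ↦ (hFsnd t).differentiableAt)
      (hkdiff.mono fun t ht ↦ (hGsnd t ht).differentiableAt) ?_ (congrArg Prod.snd h.1)
    filter_upwards [hkdiff, hfst,
      (hcoe.prodMk_nhds hcoe').eventually (hF.eventually_fst_eq_imp_eq hG hFG h hv),
      (hcoe'.prodMk_nhds hcoe).eventually (hG.eventually_fst_eq_imp_eq hF hGF h.symm hv')]
      with t hkt hfst hF' hG' hne
    have hF₀ : (velocity F t).2 = 0 :=
      not_ne_iff.1 fun hF₀ ↦ hne (congrArg Prod.snd (hF' hfst.symm hF₀))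
    have hG₀ : (velocity G (k t)).2 = 0 :=
      not_ne_iff.1 fun hG₀ ↦ hne (congrArg Prod.snd (hG' hfst hG₀)).symm
    refine (hFsnd t).deriv.trans ((hGsnd t hkt).deriv.trans ?_).symm
    simp [hF₀, hG₀]
  exact ⟨k, hk, rfl, (hfst.and hsnd).mono fun t ht ↦ Prod.ext ht.1 ht.2.symm⟩

lemma mapsTo_obliquePoints_range_prodComm (hF : IsC1 F)
    (hFG : MapsTo F (obliquePoints F) (range G)) :
    MapsTo (ContinuousLinearEquiv.prodComm ℝ ℝ ℝ ∘ F)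
      (obliquePoints (ContinuousLinearEquiv.prodComm ℝ ℝ ℝ ∘ F))
      (range (ContinuousLinearEquiv.prodComm ℝ ℝ ℝ ∘ G)) := by
  intro x hx
  have hvel : velocity (ContinuousLinearEquiv.prodComm ℝ ℝ ℝ ∘ F) x = (velocity F x).swap :=
    hF.velocity_comp (ContinuousLinearEquiv.prodComm ℝ ℝ ℝ) x
  rw [obliquePoints, mem_ofPred_eq, hvel] at hx
  rw [range_comp]
  exact mem_image_of_mem _ (hFG hx.symm)

lemma exists_contDiffAt_lift (hF : IsCleanImmersion F)
    (hG : IsCleanImmersion G) (hFG : MapsTo F (obliquePoints F) (range G))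
    (hGF : MapsTo G (obliquePoints G) (range F)) {t₀ s₀ : ℝ} (h : IsTangent F G t₀ s₀) :
    ∃ k : ℝ → ℝ, ContDiffAt ℝ 1 k t₀ ∧ k t₀ = s₀ ∧ ∀ᶠ t : ℝ in 𝓝 t₀, G (k t) = F t := by
  obtain hv | hv := ne_or_eq (velocity F t₀).1 0
  · exact exists_contDiffAt_lift_of_fst_velocity_ne_zero hF hG hFG hGF h hv
  · let L := ContinuousLinearEquiv.prodComm ℝ ℝ ℝ
    have hvel : velocity (L ∘ F) t₀ = (velocity F t₀).swap := hF.isC1.velocity_comp L t₀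
    obtain ⟨k, hk, hk₀, hkF⟩ := exists_contDiffAt_lift_of_fst_velocity_ne_zero
      (hF.comp_linearEquiv L) (hG.comp_linearEquiv L)
      (mapsTo_obliquePoints_range_prodComm hF.isC1 hFG)
      (mapsTo_obliquePoints_range_prodComm hG.isC1 hGF)
      ((isTangent_comp_iff L hF.isC1 hG.isC1).2 h)
      (by rw [hvel]; exact fun hv' ↦ hF.velocity_ne_zero t₀ (Prod.ext hv hv'))
    exact ⟨k, hk, hk₀, hkF.mono fun t ht ↦ L.injective ht⟩

lemma eventually_velocity_eq_smul {k : ℝ → ℝ} {t₀ : ℝ} (hG : IsC1 G)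
    (hk : ContDiffAt ℝ 1 k t₀) (hkF : ∀ᶠ t : ℝ in 𝓝 t₀, G (k t) = F t) :
    ∀ᶠ t : ℝ in 𝓝 t₀, velocity F t = deriv k t • velocity G (k t) := by
  filter_upwards [hk.eventually (by simp), hkF.eventually_nhds] with t hkt hkF
  have hcomp := (hG.hasStrictDerivAt (k t)).hasDerivAt.scomp t
    (hkt.differentiableAt one_ne_zero).hasDerivAt
  rw [velocity_coe, ← hcomp.deriv]
  exact (EventuallyEq.deriv_eq hkF).symm

lemma exists_contDiffAt_isTangent (hF : IsCleanImmersion F)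
    (hG : IsCleanImmersion G) (hFG : MapsTo F (obliquePoints F) (range G))
    (hGF : MapsTo G (obliquePoints G) (range F)) {t₀ s₀ : ℝ} (h : IsTangent F G t₀ s₀) :
    ∃ k : ℝ → ℝ, ContDiffAt ℝ 1 k t₀ ∧ k t₀ = s₀ ∧ deriv k t₀ ≠ 0 ∧
      ∀ᶠ t : ℝ in 𝓝 t₀, IsTangent F G t (k t) := by
  obtain ⟨k, hk, hk₀, hkF⟩ := exists_contDiffAt_lift hF hG hFG hGF h
  have hvel := eventually_velocity_eq_smul hG.isC1 hk hkF
  refine ⟨k, hk, hk₀, fun hk' ↦ hF.velocity_ne_zero t₀ ?_, ?_⟩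
  · rw [hvel.self_of_nhds, hk', zero_smul]
  · filter_upwards [hkF, hvel] with t hkF hvel
    refine ⟨hkF.symm, ?_⟩
    rw [hvel]
    simp only [cross, Prod.smul_fst, Prod.smul_snd, smul_eq_mul]
    ring

end Tracing

section Diffeomorphism

lemma add_period_of_strictMono_of_lift {T : ℝ} [hT : Fact (0 < T)] {Φ : AddCircle T → AddCircle T}
    {h : ℝ → ℝ} (hΦ : Function.Injective Φ) (hlift : ∀ t : ℝ, Φ t = h t) (hcont : Continuous h)
    (hmono : StrictMono h) (t : ℝ) : h (t + T) = h t + T := by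
  have hT := hT.out
  have hlt : h t < h (t + T) := hmono (lt_add_of_pos_right t hT)
  obtain hle | hge := le_total (h (t + T)) (h t + T)
  · refine (AddCircle.coe_eq_coe_iff_of_mem_Ioc (p := T) ⟨hlt, hle⟩
      ⟨lt_add_of_pos_right _ hT, le_rfl⟩).1 ?_
    rw [AddCircle.coe_add_period, ← hlift, ← hlift, AddCircle.coe_add_period]
  · obtain ⟨s, hs, hhs⟩ := intermediate_value_Ioc (le_add_of_nonneg_right hT.le)
      hcont.continuousOn ⟨lt_add_of_pos_right (h t) hT, hge⟩
    have hst : (s : AddCircle T) = (t + T : ℝ) := hΦ <| by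
      rw [hlift, hhs, AddCircle.coe_add_period, AddCircle.coe_add_period, hlift]
    rw [← (AddCircle.coe_eq_coe_iff_of_mem_Ioc hs ⟨lt_add_of_pos_right t hT, le_rfl⟩).1 hst, hhs]

lemma circleDiffeo_of_lift {Φ : Circ → Circ} {h : ℝ → ℝ} (hΦ : Function.Injective Φ)
    (hlift : ∀ t : ℝ, Φ t = h t) (hh : ContDiff ℝ 1 h) (hh' : ∀ t, deriv h t ≠ 0) :
    CircleDiffeo Φ := by
  refine ⟨h, hh, hh', ?_, hlift⟩
  have hderiv (t : ℝ) (_ : t ∈ univ) : HasDerivWithinAt h (deriv h t) univ t :=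
    (hh.differentiable one_ne_zero t).hasDerivAt.hasDerivWithinAt
  obtain hneg | hpos := hasDerivWithinAt_forall_lt_or_forall_gt_of_forall_ne convex_univ hderiv
    fun t _ ↦ hh' t
  · right
    intro t
    have hadd := add_period_of_strictMono_of_lift (Φ := fun x ↦ -Φ x) (h := fun t ↦ -h t)
      (neg_injective.comp hΦ) (fun t ↦ by rw [hlift, AddCircle.coe_neg]) hh.continuous.neg
      (strictAnti_of_deriv_neg fun t ↦ hneg t trivial).neg t
    linarith
  · left
    exact add_period_of_strictMono_of_lift hΦ hlift hh.continuous
      (strictMono_of_deriv_pos fun t ↦ hpos t trivial)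

variable {F G : Circ → ℝ × ℝ}

lemma IsC1.exists_map_velocity_eq_zero (L : ℝ × ℝ →L[ℝ] ℝ) (hF : IsC1 F) :
    ∃ x, L (velocity F x) = 0 := by
  obtain ⟨t, -, ht⟩ := exists_hasDerivAt_eq_zero (f := fun t : ℝ ↦ L (F t)) Real.two_pi_pos
    (L.continuous.comp (ContDiff.continuous hF)).continuousOn
    (by rw [AddCircle.coe_period, AddCircle.coe_zero])
    fun t _ ↦ (hF.hasStrictDerivAt_map L t).hasDerivAt
  exact ⟨t, ht⟩

namespace IsCleanImmersion

lemma nonempty_obliquePoints (hF : IsCleanImmersion F) : (obliquePoints F).Nonempty := by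
  obtain ⟨x, hx⟩ := hF.isC1.exists_map_velocity_eq_zero (.fst ℝ ℝ ℝ)
  obtain ⟨y, hy⟩ := hF.isC1.exists_map_velocity_eq_zero (.snd ℝ ℝ ℝ)
  have hcont := hF.isC1.continuous_velocity
  obtain ⟨z, -, hz⟩ := isPreconnected_univ {x | (velocity F x).1 ≠ 0} {x | (velocity F x).2 ≠ 0}
    (isOpen_ne_fun hcont.fst continuous_const) (isOpen_ne_fun hcont.snd continuous_const)
    (fun z _ ↦ not_and_or.1 fun h ↦ hF.velocity_ne_zero z (Prod.ext h.1 h.2))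
    ⟨y, trivial, fun h ↦ hF.velocity_ne_zero y (Prod.ext h hy)⟩
    ⟨x, trivial, fun h ↦ hF.velocity_ne_zero x (Prod.ext hx h)⟩
  exact ⟨z, hz⟩

lemma exists_isTangent (hF : IsCleanImmersion F) (hG : IsCleanImmersion G)
    (hFG : MapsTo F (obliquePoints F) (range G)) (hGF : MapsTo G (obliquePoints G) (range F))
    (x : Circ) : ∃ y, IsTangent F G x y := by
  suffices hclopen : IsClopen {x | ∃ y, IsTangent F G x y} by
    obtain ⟨z, hz⟩ := hF.nonempty_obliquePoints
    have hmem : ∀ᶠ x in 𝓝[≠] z, F x ∈ range G :=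
      eventually_nhdsWithin_of_eventually_nhds
        (((isOpen_obliquePoints hF.isC1).eventually_mem hz).mono fun x hx ↦ hFG hx)
    exact eq_univ_iff_forall.1 (hclopen.eq_univ
      ⟨z, exists_isTangent_of_frequently_mem_range hF.isC1 hG.isC1 hmem.frequently⟩) x
  constructor
  · have himage : {x | ∃ y, IsTangent F G x y} =
        Prod.fst '' {z : Circ × Circ | IsTangent F G z.1 z.2} := by
      ext
      simp
    rw [himage]
    exact isClosedMap_fst_of_compactSpace _ (isClosed_setOf_isTangent hF.isC1 hG.isC1)
  · refine isOpen_iff_mem_nhds.2 ?_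
    rintro x ⟨y, hxy⟩
    obtain ⟨t, rfl⟩ := QuotientAddGroup.mk_surjective x
    obtain ⟨s, rfl⟩ := QuotientAddGroup.mk_surjective y
    obtain ⟨k, -, -, -, hk⟩ := exists_contDiffAt_isTangent hF hG hFG hGF hxy
    rw [QuotientAddGroup.nhds_eq]
    exact hk.mono fun t ht ↦ ⟨_, ht⟩

lemma continuous_of_isTangent {Φ : Circ → Circ} (hF : IsCleanImmersion F)
    (hG : IsCleanImmersion G) (hΦ : ∀ x, IsTangent F G x (Φ x)) : Continuous Φ := by
  refine continuous_iff_isClosed.2 fun C hC ↦ ?_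
  have hpreimage : Φ ⁻¹' C =
      Prod.fst '' ({z : Circ × Circ | IsTangent F G z.1 z.2} ∩ Prod.snd ⁻¹' C) := by
    ext x
    constructor
    · exact fun hx ↦ ⟨(x, Φ x), ⟨hΦ x, hx⟩, rfl⟩
    · rintro ⟨⟨x, y⟩, ⟨hxy, hy⟩, rfl⟩
      rwa [mem_preimage, hF.eq_right_of_isTangent hG (hΦ x) hxy]
  rw [hpreimage]
  exact isClosedMap_fst_of_compactSpace _
    ((isClosed_setOf_isTangent hF.isC1 hG.isC1).inter (hC.preimage continuous_snd))

lemma injective_of_isTangent {Φ : Circ → Circ} (hF : IsCleanImmersion F)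
    (hG : IsCleanImmersion G) (hΦ : ∀ x, IsTangent F G x (Φ x)) : Function.Injective Φ :=
  fun x x' h ↦ hG.eq_right_of_isTangent hF (hΦ x).symm (h ▸ (hΦ x').symm)

lemma contDiffAt_and_deriv_ne_zero_of_isTangent (hF : IsCleanImmersion F)
    (hG : IsCleanImmersion G) (hFG : MapsTo F (obliquePoints F) (range G))
    (hGF : MapsTo G (obliquePoints G) (range F)) {h : ℝ → ℝ} (hcont : Continuous h)
    (hh : ∀ t : ℝ, IsTangent F G t (h t)) (t : ℝ) : ContDiffAt ℝ 1 h t ∧ deriv h t ≠ 0 := by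
  obtain ⟨k, hk, hkt, hk', hktan⟩ := exists_contDiffAt_isTangent hF hG hFG hGF (hh t)
  obtain ⟨U, hU, hht, hinj⟩ := (AddCircle.isLocalHomeomorph_coe (2 * π)).isLocallyInjective (h t)
  have heq : h =ᶠ[𝓝 t] k := by
    filter_upwards [hktan, hcont.continuousAt.eventually (hU.mem_nhds hht),
      hk.continuousAt.eventually (hU.mem_nhds (hkt ▸ hht))] with t' htan hhU hkU
    exact hinj hhU hkU (hF.eq_right_of_isTangent hG (hh t') htan)
  exact ⟨hk.congr_of_eventuallyEq heq, heq.deriv_eq ▸ hk'⟩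

theorem exists_circleDiffeo (hF : IsCleanImmersion F) (hG : IsCleanImmersion G)
    (hFG : MapsTo F (obliquePoints F) (range G)) (hGF : MapsTo G (obliquePoints G) (range F)) :
    ∃ Φ : Circ → Circ, CircleDiffeo Φ ∧ G ∘ Φ = F := by
  choose Φ hΦ using hF.exists_isTangent hG hFG hGF
  have hcont : Continuous fun t : ℝ ↦ Φ t :=
    (hF.continuous_of_isTangent hG hΦ).comp (AddCircle.continuous_mk' _)
  obtain ⟨s, hs⟩ := QuotientAddGroup.mk_surjective (Φ (0 : ℝ))
  obtain ⟨h, ⟨-, hlift⟩, -⟩ :=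
    (AddCircle.isCoveringMap_coe (2 * π)).existsUnique_continuousMap_lifts ⟨_, hcont⟩ 0 s hs
  have hlift (t : ℝ) : Φ t = h t := (congrFun hlift t).symm
  have hreg := hF.contDiffAt_and_deriv_ne_zero_of_isTangent hG hFG hGF h.continuous
    fun t ↦ hlift t ▸ hΦ t
  exact ⟨Φ, circleDiffeo_of_lift (hF.injective_of_isTangent hG hΦ) hlift
    (contDiff_iff_contDiffAt.2 fun t ↦ (hreg t).1) fun t ↦ (hreg t).2,
    funext fun x ↦ (hΦ x).1.symm⟩

end IsCleanImmersion

end Diffeomorphism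

theorem uniqueness_of_model_general (F G : Circ → ℝ × ℝ) (hF : IsCleanImmersion F)
    (hG : IsCleanImmersion G)
    (h : ∀ s ∈ ({id, fun p ↦ (-p.1, p.2)} : Set (ℝ × ℝ → ℝ × ℝ)), ∀ u v : ℝ × ℝ,
      u.1 < v.1 → u.2 < v.2 → persBetti (s ∘ F) u v = persBetti (s ∘ G) u v) :
    ∃ H : Circ → Circ, CircleDiffeo H ∧ G ∘ H = F :=
  hF.exists_circleDiffeo hG (mapsTo_obliquePoints_range hF hG.isC1.continuous h)
    (mapsTo_obliquePoints_range hG hF.isC1.continuous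
      fun s hs u v h₁ h₂ ↦ (h s hs u v h₁ h₂).symm)

/-- Theorem 1: if two generic functions, composed with every element of the reflection
group `Σ₂`, have the same persistent Betti numbers on all of `Δ⁺`, then they differ
by a C¹-diffeomorphism of the circle. -/
theorem uniqueness_of_model (F G : Circ → ℝ × ℝ)
    (hF : Generic F) (hG : Generic G)
    (h : ∀ s ∈ Sigma2, ∀ u v : ℝ × ℝ, u.1 < v.1 → u.2 < v.2 →
      persBetti (s ∘ F) u v = persBetti (s ∘ G) u v) :
    ∃ H : Circ → Circ, CircleDiffeo H ∧ G ∘ H = F :=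
  uniqueness_of_model_general F G hF.isCleanImmersion hG.isCleanImmersion fun s hs ↦
    h s (hs.imp_right .inl)
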